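/- There is a universal constant C > 0 with the following property. For all integers N and d with 1 ≤ d ≤ N/2 and dN even, all distinct indices i, j ∈ {1,…,N}, and every real-valued function F on symmetric N×N matrices, the uniform random d-regular graph 𝒜 satisfies | E[𝒜_{ij} F(𝒜)] − (1/((N−d)d)) ∑_{k,l} E[ χ_{ik}^{jl}(𝒜) ( F(𝒜 + ξ_{ij}^{kl}) − F(𝒜) ) ] − (d/(N−d)) E[F(𝒜)] + (1/((N−d)d)) E[ (𝒜³)_{ij} F(𝒜) ] | ≤ C N^{−1} E[ 𝓜_{ij}(F(𝒜)) ], where 𝓜_{ij}(F(𝒜)) := max_{k,l} |F(𝒜 + ξ_{ij}^{kl})| and the sums over k, l run over all pairs in {1,…,N}. -/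

import Mathlib

open MeasureTheory Filter Matrix
open scoped ENNReal NNReal

noncomputable section

/-- `A` is the adjacency matrix of a `d`-regular graph on `N` vertices:
a symmetric `{0,1}`-matrix with zero diagonal and all row sums equal to `d`. -/
def IsAdjMat (N d : ℕ) (A : Matrix (Fin N) (Fin N) ℝ) : Prop :=
  A.IsSymm ∧ (∀ i, A i i = 0) ∧ (∀ i j, A i j = 0 ∨ A i j = 1) ∧ ∀ i, ∑ j, A i j = d

/-- probability of an event under the uniform measure on `d`-regular graphs on `N` vertices. -/
def PrReg (N d : ℕ) (E : Matrix (Fin N) (Fin N) ℝ → Prop) : ℝ :=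
  (Nat.card {A : Matrix (Fin N) (Fin N) ℝ // IsAdjMat N d A ∧ E A} : ℝ) /
    (Nat.card {A : Matrix (Fin N) (Fin N) ℝ // IsAdjMat N d A} : ℝ)

/-- expectation of `F` under the uniform measure on `d`-regular graphs on `N` vertices. -/
def Ereg (N d : ℕ) (F : Matrix (Fin N) (Fin N) ℝ → ℝ) : ℝ :=
  (∑ᶠ A : {A : Matrix (Fin N) (Fin N) ℝ // IsAdjMat N d A}, F A.1) /
    (Nat.card {A : Matrix (Fin N) (Fin N) ℝ // IsAdjMat N d A} : ℝ)

/-- the `k`-th largest eigenvalue (`1`-based indexing) of a symmetric matrix. -/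
def eigval {N : ℕ} (A : Matrix (Fin N) (Fin N) ℝ) (k : ℕ) : ℝ :=
  if hA : A.IsHermitian then
    if h : k - 1 < N then
      hA.eigenvalues (Tuple.sort hA.eigenvalues (Fin.rev ⟨k - 1, h⟩))
    else 0
  else 0

/-- `q = √(d(N-d)/N)`. -/
def qval (N d : ℕ) : ℝ := Real.sqrt ((d : ℝ) * ((N : ℝ) - (d : ℝ)) / (N : ℝ))

/-- the projection `P⊥ = I - e eᵀ` (complex version). -/
def Pperp (N : ℕ) : Matrix (Fin N) (Fin N) ℂ := 1 - Matrix.of fun _ _ => (N : ℂ)⁻¹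

/-- the projection `P⊥ = I - e eᵀ` (real version). -/
def PperpR (N : ℕ) : Matrix (Fin N) (Fin N) ℝ := 1 - Matrix.of fun _ _ => (N : ℝ)⁻¹

/-- the Green function `G(z) = P⊥ (q⁻¹𝒜 - z)⁻¹ P⊥`. -/
def greenM (N d : ℕ) (A : Matrix (Fin N) (Fin N) ℝ) (z : ℂ) : Matrix (Fin N) (Fin N) ℂ :=
  Pperp N * (((qval N d : ℝ) : ℂ)⁻¹ • A.map Complex.ofReal - z • 1)⁻¹ * Pperp N

/-- the normalized trace `Ḡ(z) = N⁻¹ Tr G(z)`. -/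
def gbar (N d : ℕ) (A : Matrix (Fin N) (Fin N) ℝ) (z : ℂ) : ℂ :=
  (N : ℂ)⁻¹ * (greenM N d A z).trace

/-- the Stieltjes transform of the semicircle density `ϱ(x) = (2π)⁻¹ √((4-x²)₊)`. -/
def mSC (z : ℂ) : ℂ :=
  ∫ x in (-2 : ℝ)..2, ((Real.sqrt (4 - x ^ 2) / (2 * Real.pi) : ℝ) : ℂ) / ((x : ℂ) - z)

/-- `(Δ_{ij})_{xy} = δ_{ix}δ_{jy} + δ_{iy}δ_{jx}`. -/
def Dmat (N : ℕ) (i j : Fin N) : Matrix (Fin N) (Fin N) ℝ :=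
  Matrix.of fun x y =>
    (if i = x ∧ j = y then (1 : ℝ) else 0) + (if i = y ∧ j = x then (1 : ℝ) else 0)

/-- `ξ_{ij}^{kl} = Δ_{ij} + Δ_{kl} - Δ_{ik} - Δ_{jl}`. -/
def xiMat (N : ℕ) (i j k l : Fin N) : Matrix (Fin N) (Fin N) ℝ :=
  Dmat N i j + Dmat N k l - Dmat N i k - Dmat N j l

/-- `χ_{ij}^{kl}(𝒜) = 𝒜_{ij}(1-𝒜_{ik})𝒜_{kl}(1-𝒜_{jl})`. -/
def chi (N : ℕ) (A : Matrix (Fin N) (Fin N) ℝ) (i j k l : Fin N) : ℝ :=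
  A i j * (1 - A i k) * A k l * (1 - A j l)

/-- `𝓜_{ij}(F(𝒜)) = max_{k,l} |F(𝒜 + ξ_{ij}^{kl})|`. -/
def Mmax (N : ℕ) (i j : Fin N) (F : Matrix (Fin N) (Fin N) ℝ → ℝ)
    (A : Matrix (Fin N) (Fin N) ℝ) : ℝ :=
  ⨆ p : Fin N × Fin N, |F (A + xiMat N i j p.1 p.2)|

instance matMS (N : ℕ) : MeasurableSpace (Matrix (Fin N) (Fin N) ℝ) :=
  show MeasurableSpace (Fin N → Fin N → ℝ) from inferInstance

/-- the GOE: push-forward of independent centered Gaussians with variance `(1+δ_{ij})/N`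
on the upper triangle under the symmetrization map. -/
def goeMeasure (N : ℕ) : Measure (Matrix (Fin N) (Fin N) ℝ) :=
  Measure.map (fun f => Matrix.of fun i j => if i ≤ j then f (i, j) else f (j, i))
    (Measure.pi fun p : Fin N × Fin N =>
      ProbabilityTheory.gaussianReal 0 (if p.1 = p.2 then 2 / N else 1 / N))

/-- the uniform probability measure on `d`-regular graphs on `N` vertices, as a measure. -/
def uniformReg (N d : ℕ) : Measure (Matrix (Fin N) (Fin N) ℝ) :=
  (Nat.card {A : Matrix (Fin N) (Fin N) ℝ // IsAdjMat N d A} : ℝ≥0∞)⁻¹ •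
    Measure.sum fun A : {A : Matrix (Fin N) (Fin N) ℝ // IsAdjMat N d A} =>
      Measure.dirac A.1

/-- the matrix flow `A(t) = e^{-t/2} q⁻¹𝒜 + √(1-e^{-t}) W`, where `W = P⊥ H P⊥`. -/
def flowMat (N d : ℕ) (A H : Matrix (Fin N) (Fin N) ℝ) (t : ℝ) : Matrix (Fin N) (Fin N) ℝ :=
  Real.exp (-t / 2) • ((qval N d)⁻¹ • A) +
    Real.sqrt (1 - Real.exp (-t)) • (PperpR N * H * PperpR N)

/-- the Green function of the matrix flow, `G(t;z) = P⊥ (A(t) - z)⁻¹ P⊥`. -/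
def greenFlow (N d : ℕ) (A H : Matrix (Fin N) (Fin N) ℝ) (t : ℝ) (z : ℂ) :
    Matrix (Fin N) (Fin N) ℂ :=
  Pperp N * ((flowMat N d A H t).map Complex.ofReal - z • 1)⁻¹ * Pperp N

/-- the normalized trace of the Green function of the flow. -/
def gbarFlow (N d : ℕ) (A H : Matrix (Fin N) (Fin N) ℝ) (t : ℝ) (z : ℂ) : ℂ :=
  (N : ℂ)⁻¹ * (greenFlow N d A H t z).trace

/-! Write `χ`, `χ'` for `χ_{ij}^{kl}(𝒜)`, `χ_{ik}^{jl}(𝒜)`. When `i, j, k, l` are distinct,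
`𝒜 ↦ 𝒜 + ξ_{ij}^{kl}` is a bijection from the regular graphs with `χ' = 1` onto those with `χ = 1`,
so `E[χ F(𝒜)] = E[χ' F(𝒜 + ξ_{ij}^{kl})]`. Summing over `k, l` gives the formula, because `∑ χ` and
`∑ χ'` are explicit functions of `𝒜_{ij}` and `(𝒜³)_{ij}`: the terms `𝒜_{ij} (𝒜³)_{ij}` cancel.
For coinciding indices `χ'` survives only if `k = l` and `χ` only if `k = i` or `l = j`, so the
remainder consists of at most `3 d` terms for each graph. -/

open scoped BigOperators

lemma nodup_four_iff {α : Type*} {a b c e : α} :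
    [a, b, c, e].Nodup ↔ a ≠ b ∧ a ≠ c ∧ a ≠ e ∧ b ≠ c ∧ b ≠ e ∧ c ≠ e := by
  simp [and_assoc]

lemma nodup_four_swap_iff {α : Type*} {a b c e : α} :
    [a, c, b, e].Nodup ↔ [a, b, c, e].Nodup :=
  ((List.Perm.swap b c [e]).cons a).nodup_iff

section Switching

variable {N : ℕ}

lemma isSymm_Dmat (i j : Fin N) : (Dmat N i j).IsSymm := by
  ext x y
  simp only [Matrix.transpose_apply, Dmat, Matrix.of_apply, add_comm]

lemma Dmat_apply_of_ne {i j : Fin N} (hij : i ≠ j) (x y : Fin N) :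
    Dmat N i j x y = if s(x, y) = s(i, j) then 1 else 0 := by
  simp only [Dmat, Matrix.of_apply, Sym2.eq_iff]
  grind

lemma sum_Dmat_apply (i j x : Fin N) :
    ∑ y, Dmat N i j x y = (if i = x then 1 else 0) + (if j = x then 1 else 0) := by
  simp [Dmat, Finset.sum_add_distrib, ite_and]

lemma isSymm_xiMat (i j k l : Fin N) : (xiMat N i j k l).IsSymm :=
  (((isSymm_Dmat i j).add (isSymm_Dmat k l)).sub (isSymm_Dmat i k)).sub (isSymm_Dmat j l)

lemma sum_xiMat_apply (i j k l x : Fin N) : ∑ y, xiMat N i j k l x y = 0 := by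
  simp only [xiMat, Matrix.sub_apply, Matrix.add_apply, Finset.sum_sub_distrib,
    Finset.sum_add_distrib, sum_Dmat_apply]
  ring

lemma xiMat_swap (i j k l : Fin N) : xiMat N i k j l = -xiMat N i j k l := by
  simp only [xiMat]
  abel

lemma xiMat_apply_of_nodup {i j k l : Fin N} (h : [i, j, k, l].Nodup) (x y : Fin N) :
    xiMat N i j k l x y =
      if s(x, y) = s(i, j) ∨ s(x, y) = s(k, l) then 1
      else if s(x, y) = s(i, k) ∨ s(x, y) = s(j, l) then -1 else 0 := by
  obtain ⟨hij, hik, -, -, hjl, hkl⟩ := nodup_four_iff.1 h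
  simp only [xiMat, Matrix.sub_apply, Matrix.add_apply, Dmat_apply_of_ne, ne_eq, hij, hik, hjl, hkl,
    not_false_eq_true]
  grind

end Switching

namespace IsAdjMat

variable {N d : ℕ} {A : Matrix (Fin N) (Fin N) ℝ} {i j k l : Fin N}

lemma apply_comm (hA : IsAdjMat N d A) (x y : Fin N) : A x y = A y x := hA.1.apply y x

lemma apply_self (hA : IsAdjMat N d A) (x : Fin N) : A x x = 0 := hA.2.1 x

lemma apply_eq_zero_or_eq_one (hA : IsAdjMat N d A) (x y : Fin N) : A x y = 0 ∨ A x y = 1 :=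
  hA.2.2.1 x y

lemma apply_nonneg (hA : IsAdjMat N d A) (x y : Fin N) : 0 ≤ A x y := by
  rcases hA.apply_eq_zero_or_eq_one x y with h | h <;> simp [h]

lemma sum_row (hA : IsAdjMat N d A) (x : Fin N) : ∑ y, A x y = d := hA.2.2.2 x

lemma sum_col (hA : IsAdjMat N d A) (y : Fin N) : ∑ x, A x y = d := by
  simp only [hA.apply_comm _ y, hA.sum_row]

lemma chi_eq_ite (hA : IsAdjMat N d A) (i j k l : Fin N) :
    chi N A i j k l = if A i j = 1 ∧ A i k = 0 ∧ A k l = 1 ∧ A j l = 0 then 1 else 0 := by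
  rcases hA.apply_eq_zero_or_eq_one i j with hij | hij <;>
  rcases hA.apply_eq_zero_or_eq_one i k with hik | hik <;>
  rcases hA.apply_eq_zero_or_eq_one k l with hkl | hkl <;>
  rcases hA.apply_eq_zero_or_eq_one j l with hjl | hjl <;>
  simp [chi, hij, hik, hkl, hjl]

lemma chi_eq_one_iff (hA : IsAdjMat N d A) :
    chi N A i j k l = 1 ↔ A i j = 1 ∧ A i k = 0 ∧ A k l = 1 ∧ A j l = 0 := by
  simp [hA.chi_eq_ite]

lemma chi_eq_zero_or_eq_one (hA : IsAdjMat N d A) (i j k l : Fin N) :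
    chi N A i j k l = 0 ∨ chi N A i j k l = 1 := by
  rw [hA.chi_eq_ite]
  exact (ite_eq_or_eq _ 1 0).symm

lemma chi_nonneg (hA : IsAdjMat N d A) (i j k l : Fin N) : 0 ≤ chi N A i j k l := by
  rcases hA.chi_eq_zero_or_eq_one i j k l with h | h <;> simp [h]

lemma nodup_of_chi_eq_one (hA : IsAdjMat N d A) (hik : i ≠ k) (hjl : j ≠ l)
    (hchi : chi N A i j k l = 1) : [i, j, k, l].Nodup := by
  obtain ⟨hAij, hAik, hAkl, hAjl⟩ := hA.chi_eq_one_iff.1 hchi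
  have hij : i ≠ j := by rintro rfl; simp [hA.apply_self] at hAij
  have hkl : k ≠ l := by rintro rfl; simp [hA.apply_self] at hAkl
  have hil : i ≠ l := by rintro rfl; simp [hA.apply_comm j, hAij] at hAjl
  have hjk : j ≠ k := by rintro rfl; simp [hAij] at hAik
  simp [*]

lemma add_xiMat (hA : IsAdjMat N d A) (h : [i, j, k, l].Nodup) (hchi : chi N A i k j l = 1) :
    IsAdjMat N d (A + xiMat N i j k l) := by
  obtain ⟨hik, hij, hjl, hkl⟩ := hA.chi_eq_one_iff.1 hchi
  refine ⟨hA.1.add (isSymm_xiMat i j k l), fun x => ?_, fun x y => ?_, fun x => ?_⟩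
  · rw [Matrix.add_apply, hA.apply_self, xiMat_apply_of_nodup h]
    rw [nodup_four_iff] at h
    grind
  · have hxy := hA.apply_eq_zero_or_eq_one x y
    have hsymm := hA.apply_comm
    rw [Matrix.add_apply, xiMat_apply_of_nodup h]
    rw [nodup_four_iff] at h
    grind
  · simp only [Matrix.add_apply, Finset.sum_add_distrib, hA.sum_row, sum_xiMat_apply, add_zero]

lemma chi_add_xiMat (hA : IsAdjMat N d A) (h : [i, j, k, l].Nodup)
    (hchi : chi N A i k j l = 1) : chi N (A + xiMat N i j k l) i j k l = 1 := by
  rw [(hA.add_xiMat h hchi).chi_eq_one_iff]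
  obtain ⟨hik, hij, hjl, hkl⟩ := hA.chi_eq_one_iff.1 hchi
  simp only [Matrix.add_apply, xiMat_apply_of_nodup h, hik, hij, hjl, hkl]
  rw [nodup_four_iff] at h
  grind

end IsAdjMat

section Expectation

variable {N d : ℕ}

lemma finite_setOf_isAdjMat (N d : ℕ) : {A | IsAdjMat N d A}.Finite :=
  (Set.Finite.pi' fun _ => Set.Finite.pi' fun _ => Set.toFinite {(0 : ℝ), 1}).subset
    fun _ hA => hA.apply_eq_zero_or_eq_one

instance instFintypeIsAdjMat (N d : ℕ) : Fintype {A // IsAdjMat N d A} :=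
  (finite_setOf_isAdjMat N d).fintype

lemma Ereg_eq_expect (F : Matrix (Fin N) (Fin N) ℝ → ℝ) :
    Ereg N d F = 𝔼 A : {A // IsAdjMat N d A}, F A := by
  rw [Ereg, finsum_eq_sum_of_fintype, Nat.card_eq_fintype_card, Fintype.expect_eq_sum_div_card]

lemma Ereg_mono {F G : Matrix (Fin N) (Fin N) ℝ → ℝ} (h : ∀ A, IsAdjMat N d A → F A ≤ G A) :
    Ereg N d F ≤ Ereg N d G := by
  simp only [Ereg_eq_expect]
  exact Finset.expect_le_expect fun A _ => h A A.2

lemma abs_Ereg_le (F : Matrix (Fin N) (Fin N) ℝ → ℝ) :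
    |Ereg N d F| ≤ Ereg N d fun A => |F A| := by
  simp only [Ereg_eq_expect]
  exact Finset.abs_expect_le _ _

lemma Ereg_chi_mul_comp_add_xiMat {i j k l : Fin N} (h : [i, j, k, l].Nodup)
    (F : Matrix (Fin N) (Fin N) ℝ → ℝ) :
    Ereg N d (fun A => chi N A i k j l * F (A + xiMat N i j k l)) =
      Ereg N d fun A => chi N A i j k l * F A := by
  have chi_eq_one {a b c e : Fin N} {A : {A // IsAdjMat N d A}} {x : ℝ}
      (hx : chi N A a b c e * x ≠ 0) : chi N A a b c e = 1 :=
    (A.2.chi_eq_zero_or_eq_one a b c e).resolve_left (left_ne_zero_of_mul hx)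
  have h' : [i, k, j, l].Nodup := nodup_four_swap_iff.2 h
  simp only [Ereg, finsum_eq_sum_of_fintype]
  congr 1
  refine Finset.sum_bij_ne_zero
    (fun A _ hA => ⟨A + xiMat N i j k l, A.2.add_xiMat h (chi_eq_one hA)⟩)
    (fun _ _ _ => Finset.mem_univ _) (fun A _ _ B _ _ hAB => ?_) (fun B _ hB => ?_)
    (fun A _ hA => ?_)
  · exact Subtype.ext (add_right_cancel (Subtype.ext_iff.1 hAB))
  · have hcancel : B.1 + xiMat N i k j l + xiMat N i j k l = B := by
      rw [xiMat_swap, neg_add_cancel_right]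
    refine ⟨⟨B + xiMat N i k j l, B.2.add_xiMat h' (chi_eq_one hB)⟩, Finset.mem_univ _, ?_,
      Subtype.ext hcancel⟩
    rw [hcancel, B.2.chi_add_xiMat h' (chi_eq_one hB), one_mul]
    exact right_ne_zero_of_mul hB
  · rw [A.2.chi_add_xiMat h (chi_eq_one hA), chi_eq_one hA]

end Expectation

section Counting

variable {N d : ℕ} {A : Matrix (Fin N) (Fin N) ℝ}

lemma pow_three_apply {n R : Type*} [Fintype n] [DecidableEq n] [Semiring R]
    (A : Matrix n n R) (i j : n) : (A ^ 3) i j = ∑ k, ∑ l, A i k * A k l * A l j := by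
  simp only [pow_three', Matrix.mul_apply, Finset.sum_mul]
  exact Finset.sum_comm

lemma IsAdjMat.sum_chi (hA : IsAdjMat N d A) (i j : Fin N) :
    ∑ k, ∑ l, chi N A i j k l = A i j * (N * d - 2 * d ^ 2 + (A ^ 3) i j) := by
  have hedges : ∑ k, ∑ l, A k l = N * d := by simp [hA.sum_row]
  have hfrom_i : ∑ k, ∑ l, A i k * A k l = d ^ 2 := by
    simp only [← Finset.mul_sum, ← Finset.sum_mul, hA.sum_row, sq]
  have hto_j : ∑ k, ∑ l, A k l * A l j = d ^ 2 := by
    rw [Finset.sum_comm]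
    simp only [← Finset.mul_sum, ← Finset.sum_mul, hA.sum_col, sq]
  calc ∑ k, ∑ l, chi N A i j k l
      = A i j * ∑ k, ∑ l,
          (A k l - A i k * A k l - A k l * A l j + A i k * A k l * A l j) := by
        simp only [Finset.mul_sum]
        refine Finset.sum_congr rfl fun k _ => Finset.sum_congr rfl fun l _ => ?_
        rw [chi, hA.apply_comm j l]
        ring
    _ = A i j * (N * d - 2 * d ^ 2 + (A ^ 3) i j) := by
        simp only [Finset.sum_add_distrib, Finset.sum_sub_distrib, hedges, hfrom_i, hto_j,
          pow_three_apply]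
        ring

lemma IsAdjMat.sum_chi_swap (hA : IsAdjMat N d A) (i j : Fin N) :
    ∑ k, ∑ l, chi N A i k j l = (1 - A i j) * (d ^ 2 - (A ^ 3) i j) := by
  have hpairs : ∑ k, ∑ l, A i k * A l j = d ^ 2 := by
    simp only [← Finset.mul_sum, ← Finset.sum_mul, hA.sum_row, hA.sum_col, sq]
  calc ∑ k, ∑ l, chi N A i k j l
      = (1 - A i j) * ∑ k, ∑ l, (A i k * A l j - A i k * A k l * A l j) := by
        simp only [Finset.mul_sum]
        refine Finset.sum_congr rfl fun k _ => Finset.sum_congr rfl fun l _ => ?_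
        rw [chi, hA.apply_comm j l]
        ring
    _ = (1 - A i j) * (d ^ 2 - (A ^ 3) i j) := by
        simp only [Finset.sum_sub_distrib, hpairs, pow_three_apply]

end Counting

section Degenerate

variable {N d : ℕ} {A : Matrix (Fin N) (Fin N) ℝ} {i j k l : Fin N}

/-- A majorant of `χ_{ij}^{kl}(𝒜)` when `i, j, k, l` are not distinct. For an adjacency matrix,
`i = k` and `j = l` are the only coincidences under which `χ_{ij}^{kl}(𝒜)` can be nonzero. -/
def degenerateBound (N : ℕ) (A : Matrix (Fin N) (Fin N) ℝ) (i j k l : Fin N) : ℝ :=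
  (if i = k then A k l else 0) + (if j = l then A k l else 0)

lemma IsAdjMat.degenerateBound_nonneg (hA : IsAdjMat N d A) (i j k l : Fin N) :
    0 ≤ degenerateBound N A i j k l := by
  unfold degenerateBound
  have := hA.apply_nonneg k l
  positivity

lemma IsAdjMat.chi_le_degenerateBound (hA : IsAdjMat N d A) (h : ¬[i, j, k, l].Nodup) :
    chi N A i j k l ≤ degenerateBound N A i j k l := by
  rcases hA.chi_eq_zero_or_eq_one i j k l with hchi | hchi
  · exact hchi.trans_le (hA.degenerateBound_nonneg i j k l)
  · have hAkl : A k l = 1 := (hA.chi_eq_one_iff.1 hchi).2.2.1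
    have hcoincide : i = k ∨ j = l := by
      by_contra! hne
      exact h (hA.nodup_of_chi_eq_one hne.1 hne.2 hchi)
    rw [hchi, degenerateBound, hAkl]
    rcases hcoincide with rfl | rfl
    · simp only [if_true, le_add_iff_nonneg_right]
      positivity
    · simp only [if_true, le_add_iff_nonneg_left]
      positivity

lemma IsAdjMat.sum_degenerateBound (hA : IsAdjMat N d A) (i j : Fin N) :
    ∑ k, ∑ l, degenerateBound N A i j k l = 2 * d := by
  simp only [degenerateBound, Finset.sum_add_distrib, Finset.sum_ite_eq, Finset.mem_univ, if_true,
    hA.sum_col]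
  rw [Finset.sum_comm]
  simp [hA.sum_row, two_mul]

lemma IsAdjMat.sum_degenerateBound_swap (hA : IsAdjMat N d A) (hij : i ≠ j) :
    ∑ k, ∑ l, degenerateBound N A i k j l = d := by
  simp [degenerateBound, hij, hA.sum_row]

end Degenerate

section Remainder

variable {N d : ℕ} {i j : Fin N} (F : Matrix (Fin N) (Fin N) ℝ → ℝ)

lemma abs_apply_add_xiMat_le_Mmax (i j k l : Fin N) (A : Matrix (Fin N) (Fin N) ℝ) :
    |F (A + xiMat N i j k l)| ≤ Mmax N i j F A :=
  le_ciSup (f := fun p : Fin N × Fin N => |F (A + xiMat N i j p.1 p.2)|)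
    (Set.finite_range _).bddAbove (k, l)

lemma abs_apply_le_Mmax (i j : Fin N) (A : Matrix (Fin N) (Fin N) ℝ) :
    |F A| ≤ Mmax N i j F A := by
  have hxi : xiMat N i j j j = 0 := by simp [xiMat]
  simpa [hxi] using abs_apply_add_xiMat_le_Mmax F i j j j A

lemma Mmax_nonneg (i j : Fin N) (A : Matrix (Fin N) (Fin N) ℝ) : 0 ≤ Mmax N i j F A :=
  (abs_nonneg _).trans (abs_apply_le_Mmax F i j A)

lemma Ereg_Mmax_nonneg (N d : ℕ) (i j : Fin N) (F : Matrix (Fin N) (Fin N) ℝ → ℝ) :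
    0 ≤ Ereg N d (Mmax N i j F) := by
  rw [Ereg_eq_expect]
  exact Finset.expect_nonneg fun A _ => Mmax_nonneg F i j A

/-- The discrepancy `χ_{ij}^{kl}(𝒜) F(𝒜) - χ_{ik}^{jl}(𝒜) F(𝒜 + ξ_{ij}^{kl})` between the two sides
of the switching identity at a single graph. -/
def switchDiff (N : ℕ) (i j : Fin N) (F : Matrix (Fin N) (Fin N) ℝ → ℝ) (k l : Fin N)
    (A : Matrix (Fin N) (Fin N) ℝ) : ℝ :=
  chi N A i j k l * F A - chi N A i k j l * F (A + xiMat N i j k l)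

lemma Ereg_switchDiff_eq_zero {k l : Fin N} (h : [i, j, k, l].Nodup) :
    Ereg N d (switchDiff N i j F k l) = 0 := by
  have hswitch := Ereg_chi_mul_comp_add_xiMat (d := d) h F
  simp only [Ereg_eq_expect] at hswitch ⊢
  simp only [switchDiff, Finset.expect_sub_distrib, hswitch, sub_self]

lemma IsAdjMat.abs_switchDiff_le {A : Matrix (Fin N) (Fin N) ℝ} (hA : IsAdjMat N d A)
    {k l : Fin N} (h : ¬[i, j, k, l].Nodup) :
    |switchDiff N i j F k l A| ≤
      (degenerateBound N A i j k l + degenerateBound N A i k j l) * Mmax N i j F A := by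
  have h' : ¬[i, k, j, l].Nodup := nodup_four_swap_iff.not.2 h
  calc |switchDiff N i j F k l A|
      ≤ |chi N A i j k l * F A| + |chi N A i k j l * F (A + xiMat N i j k l)| := abs_sub _ _
    _ = chi N A i j k l * |F A| + chi N A i k j l * |F (A + xiMat N i j k l)| := by
        rw [abs_mul, abs_mul, abs_of_nonneg (hA.chi_nonneg i j k l),
          abs_of_nonneg (hA.chi_nonneg i k j l)]
    _ ≤ degenerateBound N A i j k l * Mmax N i j F A +
          degenerateBound N A i k j l * Mmax N i j F A := by
        have := hA.degenerateBound_nonneg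
        gcongr
        · apply this
        · exact hA.chi_le_degenerateBound h
        · exact abs_apply_le_Mmax F i j A
        · apply this
        · exact hA.chi_le_degenerateBound h'
        · exact abs_apply_add_xiMat_le_Mmax F i j k l A
    _ = _ := (add_mul _ _ _).symm

lemma abs_Ereg_switchDiff_le (i j k l : Fin N) :
    |Ereg N d (switchDiff N i j F k l)| ≤ Ereg N d fun A =>
      (degenerateBound N A i j k l + degenerateBound N A i k j l) * Mmax N i j F A := by
  by_cases h : [i, j, k, l].Nodup
  · rw [Ereg_switchDiff_eq_zero F h, abs_zero, Ereg_eq_expect]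
    exact Finset.expect_nonneg fun A _ => mul_nonneg
      (add_nonneg (A.2.degenerateBound_nonneg ..) (A.2.degenerateBound_nonneg ..))
      (Mmax_nonneg F i j A)
  · exact (abs_Ereg_le _).trans (Ereg_mono fun A hA => hA.abs_switchDiff_le F h)

lemma abs_sum_Ereg_switchDiff_le (hij : i ≠ j) :
    |∑ k, ∑ l, Ereg N d (switchDiff N i j F k l)| ≤ 3 * d * Ereg N d (Mmax N i j F) := by
  calc |∑ k, ∑ l, Ereg N d (switchDiff N i j F k l)|
      ≤ ∑ k, ∑ l, Ereg N d fun A =>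
          (degenerateBound N A i j k l + degenerateBound N A i k j l) * Mmax N i j F A :=
        (Finset.abs_sum_le_sum_abs _ _).trans <| Finset.sum_le_sum fun k _ =>
          (Finset.abs_sum_le_sum_abs _ _).trans <| Finset.sum_le_sum fun l _ =>
            abs_Ereg_switchDiff_le F i j k l
    _ = 𝔼 A : {A // IsAdjMat N d A}, (∑ k, ∑ l,
          (degenerateBound N A i j k l + degenerateBound N A i k j l)) * Mmax N i j F A := by
        simp only [Ereg_eq_expect, ← Finset.expect_sum_comm, ← Finset.sum_mul]
    _ = 3 * d * Ereg N d (Mmax N i j F) := by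
        rw [Ereg_eq_expect, Finset.mul_expect]
        refine Finset.expect_congr rfl fun A _ => ?_
        simp only [Finset.sum_add_distrib, A.2.sum_degenerateBound,
          A.2.sum_degenerateBound_swap hij]
        ring

lemma IsAdjMat.sum_switchDiff {A : Matrix (Fin N) (Fin N) ℝ} (hA : IsAdjMat N d A)
    (i j : Fin N) :
    ∑ k, ∑ l, switchDiff N i j F k l A =
      (N - d) * d * (A i j * F A) -
        ∑ k, ∑ l, chi N A i k j l * (F (A + xiMat N i j k l) - F A) -
        d ^ 2 * F A + (A ^ 3) i j * F A := by
  simp only [switchDiff, mul_sub, Finset.sum_sub_distrib, ← Finset.sum_mul, hA.sum_chi,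
    hA.sum_chi_swap]
  ring

lemma sum_Ereg_switchDiff (N d : ℕ) (i j : Fin N) (F : Matrix (Fin N) (Fin N) ℝ → ℝ) :
    ∑ k, ∑ l, Ereg N d (switchDiff N i j F k l) =
      (N - d) * d * Ereg N d (fun A => A i j * F A) -
        ∑ k, ∑ l, Ereg N d (fun A => chi N A i k j l * (F (A + xiMat N i j k l) - F A)) -
        d ^ 2 * Ereg N d F + Ereg N d (fun A => (A ^ 3) i j * F A) := by
  simp only [Ereg_eq_expect, ← Finset.expect_sum_comm, Finset.mul_expect,
    ← Finset.expect_sub_distrib, ← Finset.expect_add_distrib]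
  exact Finset.expect_congr rfl fun A _ => A.2.sum_switchDiff F i j

end Remainder

lemma inv_sub_le_two_mul_inv {x y : ℝ} (hy : 0 < y) (hxy : 2 * x ≤ y) :
    (y - x)⁻¹ ≤ 2 * y⁻¹ := by
  rw [← div_eq_mul_inv, inv_le_comm₀ (by linarith) (by positivity), inv_div]
  linarith

theorem integration_by_parts_general {N d : ℕ} (hd : 1 ≤ d) (hdN : d < N)
    (_heven : Even (d * N)) {i j : Fin N} (hij : i ≠ j) (F : Matrix (Fin N) (Fin N) ℝ → ℝ) :
    |Ereg N d (fun A => A i j * F A) -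
        (1 / (((N : ℝ) - (d : ℝ)) * (d : ℝ))) * ∑ k : Fin N, ∑ l : Fin N,
          Ereg N d (fun A => chi N A i k j l * (F (A + xiMat N i j k l) - F A)) -
        ((d : ℝ) / ((N : ℝ) - (d : ℝ))) * Ereg N d F +
        (1 / (((N : ℝ) - (d : ℝ)) * (d : ℝ))) * Ereg N d (fun A => (A ^ 3) i j * F A)| ≤
      3 * ((N : ℝ) - d)⁻¹ * Ereg N d (Mmax N i j F) := by
  have hd_pos : (0 : ℝ) < d := by exact_mod_cast hd
  have hNd_pos : (0 : ℝ) < N - d := sub_pos.2 (by exact_mod_cast hdN)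
  calc _ = |(((N : ℝ) - d) * d)⁻¹ * ∑ k, ∑ l, Ereg N d (switchDiff N i j F k l)| := by
        rw [sum_Ereg_switchDiff]
        congr 1
        field_simp
    _ = (((N : ℝ) - d) * d)⁻¹ * |∑ k, ∑ l, Ereg N d (switchDiff N i j F k l)| := by
        rw [abs_mul, abs_of_pos (inv_pos.2 (mul_pos hNd_pos hd_pos))]
    _ ≤ (((N : ℝ) - d) * d)⁻¹ * (3 * d * Ereg N d (Mmax N i j F)) := by
        gcongr
        exact abs_sum_Ereg_switchDiff_le F hij
    _ = 3 * ((N : ℝ) - d)⁻¹ * Ereg N d (Mmax N i j F) := by field_simp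

/-- Integration by parts formula for the uniform measure on `d`-regular graphs,
with a remainder term insensitive to the degree `d`. -/
theorem integration_by_parts :
    ∃ C > (0 : ℝ), ∀ N d : ℕ, 1 ≤ d → 2 * d ≤ N → Even (d * N) →
      ∀ i j : Fin N, i ≠ j → ∀ F : Matrix (Fin N) (Fin N) ℝ → ℝ,
      |Ereg N d (fun A => A i j * F A) -
          (1 / (((N : ℝ) - (d : ℝ)) * (d : ℝ))) * ∑ k : Fin N, ∑ l : Fin N,
            Ereg N d (fun A => chi N A i k j l * (F (A + xiMat N i j k l) - F A)) -
          ((d : ℝ) / ((N : ℝ) - (d : ℝ))) * Ereg N d F +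
          (1 / (((N : ℝ) - (d : ℝ)) * (d : ℝ))) * Ereg N d (fun A => (A ^ 3) i j * F A)| ≤
        C * (N : ℝ)⁻¹ * Ereg N d (Mmax N i j F) := by
  refine ⟨6, by norm_num, fun N d hd hN heven i j hij F => ?_⟩
  refine (integration_by_parts_general hd (by lia) heven hij F).trans
    (mul_le_mul_of_nonneg_right ?_ (Ereg_Mmax_nonneg N d i j F))
  linarith [inv_sub_le_two_mul_inv (x := d) (y := N) (by norm_cast; lia) (by exact_mod_cast hN)]

end
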